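/- Let K be a field and let S = node([S_1,…,S_m]) and T = node([T_1,…,T_n]) be finite planar reduced rooted trees of arities m ≥ 2 and n ≥ 2. For 2 ≤ k ≤ m+n set Γ̄_k(m,n) := Γ_k(1,1) ∪ Γ_k(1,n) ∪ Γ_k(m,1) ∪ Γ_k(m,n), and for (α,β) ∈ Γ̄_k(m,n) define R_{(α,β)} in the free K-module on PRT' as follows (γ[i] denotes the i-th smallest element of a subset γ of {1,…,k}; graftings node are extended K-multilinearly): if α = {1} and β = {2}, R_{(α,β)} = S·T; if α = {2} and β = {1}, R_{(α,β)} = T·S; if α = {ν} and #β = n, then R_{(α,β)} = node([T_1,…,T_{ν−1}, S, T_ν,…,T_n]) when k = n+1, and R_{(α,β)} = node([T_1,…,T_{ν−1}, T_ν ⧢ S, T_{ν+1},…,T_n]) when k = n; symmetrically, if β = {μ} and #α = m, then R_{(α,β)} = node([S_1,…,S_{μ−1}, T, S_μ,…,S_m]) when k = m+1, and R_{(α,β)} = node([S_1,…,S_{μ−1}, S_μ ⧢ T, S_{μ+1},…,S_m]) when k = m; if #α = m and #β = n, then R_{(α,β)} = node([P_1,…,P_k]) where P_j = S_i if j ∈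 α∖β with α[i] = j, P_j = T_i if j ∈ β∖α with β[i] = j, and P_j = S_i ⧢ T_l if j ∈ α∩β with α[i] = j and β[l] = j. Then S ⧢ T = Σ_{k=2}^{m+n} Σ_{(α,β) ∈ Γ̄_k(m,n)} R_{(α,β)}. -/

import Mathlib

inductive PTree : Type where
  | node : List PTree → PTree

namespace PTree

/-- the single-vertex tree -/
def x : PTree := node []

/-- the number of leaves of a tree -/
def deg : PTree → ℕ
  | node l => max 1 (l.attach.map fun t => deg t.1).sum
decreasing_by
  have := List.sizeOf_lt_of_mem t.2
  simp; omega

/-- a tree is reduced if no vertex has arity 1 -/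
inductive Reduced : PTree → Prop where
  | node (l : List PTree) (hlen : l.length ≠ 1) (h : ∀ t ∈ l, Reduced t) :
      Reduced (node l)

/-- the reduction of a tree -/
def red : PTree → PTree
  | node [t] => red t
  | node l => node (l.attach.map fun t => red t.1)
decreasing_by
  · simp; omega
  · have := List.sizeOf_lt_of_mem t.2
    simp; omega

mutual
/-- the spanning subtree `T_I` determined by a set `I ⊆ range (deg T)` of leaf positions
(counted from the left, starting at `0`) -/
def sub : PTree → Finset ℕ → PTree
  | node l, I => node (subList l I)
/-- auxiliary: the list of spanning subtrees of the children, children without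
selected leaves being dropped -/
def subList : List PTree → Finset ℕ → List PTree
  | [], _ => []
  | t :: ts, I =>
      (if (I.filter (· < t.deg)).Nonempty then [sub t (I.filter (· < t.deg))] else [])
        ++ subList ts ((I.filter fun j => t.deg ≤ j).image fun j => j - t.deg)
end

/-- the contraction `T|I`: the reduction of the spanning subtree, `1` (i.e. `none`) if `I = ∅` -/
def contract (T : PTree) (I : Finset ℕ) : Option PTree :=
  if I = ∅ then none else some (red (sub T I))

end PTree

/-- `PRT'`: finite planar rooted trees together with the empty tree `1 = none` -/
abbrev OT := Option PTree

/-- `deg` on `PRT'` -/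
def degO (o : OT) : ℕ := o.elim 0 PTree.deg

/-- membership in `PRT'` = reduced trees together with the empty tree `1` -/
def ROT (o : OT) : Prop := ∀ t, o = some t → t.Reduced

/-- contraction on `PRT'` -/
def contractO : OT → Finset ℕ → OT
  | none, _ => none
  | some t, I => PTree.contract t I

open Classical in
/-- `N_{S,T}(V)` as a finite set of subsets of the set of leaf positions of `V` -/
noncomputable def NFinset (S T V : OT) : Finset (Finset ℕ) :=
  (Finset.range (degO V)).powerset.filter fun I =>
    contractO V I = S ∧ contractO V (Finset.range (degO V) \ I) = T

/-- `#N_{S,T}(V)` -/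
noncomputable def Ncount (S T V : OT) : ℕ := (NFinset S T V).card

/-- the free `K`-module on `PRT'` (realized inside the free module on all of `Option PTree`;
the elements of the free module on `PRT'` are those whose support satisfies `ROT`) -/
abbrev AMod (K : Type) [Field K] := OT →₀ K

/-- `f` belongs to the free `K`-module on `PRT'` -/
def suppRed (K : Type) [Field K] (f : AMod K) : Prop := ∀ t ∈ f.support, ROT t

/-- the planar shuffle product `S ⧢ T = Σ_{V ∈ PRT'} #N_{S,T}(V)·V` of two monomials -/
noncomputable def shuffleM (K : Type) [Field K] (S T : OT) : AMod K :=
  ∑ᶠ (V : OT) (_ : ROT V), Finsupp.single V ((Ncount S T V : K))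

/-- the `K`-bilinear extension of the planar shuffle product -/
noncomputable def shuffleF (K : Type) [Field K] (f g : AMod K) : AMod K :=
  f.sum fun S a => g.sum fun T b => (a * b) • shuffleM K S T

/-- tensor-like product of a list of module elements, as a finitely supported
function on lists of basis elements -/
noncomputable def listProd (K : Type) [Field K] {σ : Type} : List (σ →₀ K) → (List σ →₀ K)
  | [] => Finsupp.single [] 1
  | f :: fs => f.sum fun t a => (listProd K fs).sum fun ts b => Finsupp.single (t :: ts) (a * b)

/-- the `K`-multilinear extension of an operation on basis elements -/
noncomputable def mulExt (K : Type) [Field K] {σ τ : Type} (op : List σ → τ)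
    (l : List (σ →₀ K)) : τ →₀ K :=
  (listProd K l).sum fun ts c => Finsupp.single (op ts) c

/-- `gr` : delete all entries equal to `1`, then return `1` if no entry remains,
the unique entry if exactly one remains, and the grafting `node` otherwise -/
def grO (ts : List OT) : OT :=
  match ts.reduceOption with
  | [] => none
  | [t] => some t
  | l => some (PTree.node l)

/-- the `K`-multilinear extension of `gr` -/
noncomputable def grF (K : Type) [Field K] (l : List (AMod K)) : AMod K := mulExt K grO l

/-- the `K`-multilinear extension of the grafting `node` (junk value `0` on lists
containing the empty tree `1`, which never occurs in its uses here) -/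
noncomputable def nodeF (K : Type) [Field K] (l : List (AMod K)) : AMod K :=
  (listProd K l).sum fun ts c =>
    match (ts.mapM (id : Option PTree → Option PTree) : Option (List PTree)) with
    | some l' => Finsupp.single (some (PTree.node l')) c
    | none => 0

/-- `Γ_k(m,n)` as a set of pairs of subsets of `{0,…,k-1}` (0-indexed) -/
def GammaSet (k m n : ℕ) : Set (Finset ℕ × Finset ℕ) :=
  {p | p.1 ⊆ Finset.range k ∧ p.2 ⊆ Finset.range k ∧
       p.1.card = m ∧ p.2.card = n ∧ p.1 ∪ p.2 = Finset.range k}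

/-- `Γ_k(m,n)` as a finite set -/
def GammaF (k m n : ℕ) : Finset (Finset ℕ × Finset ℕ) :=
  ((Finset.range k).powerset ×ˢ (Finset.range k).powerset).filter fun p =>
    p.1.card = m ∧ p.2.card = n ∧ p.1 ∪ p.2 = Finset.range k

/-- `Γ̄_k(m,n) := Γ_k(1,1) ∪ Γ_k(1,n) ∪ Γ_k(m,1) ∪ Γ_k(m,n)` -/
def GammaBar (k m n : ℕ) : Finset (Finset ℕ × Finset ℕ) :=
  GammaF k 1 1 ∪ GammaF k 1 n ∪ GammaF k m 1 ∪ GammaF k m n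

/-- the `i`-th smallest element of a finite set of naturals (0-indexed; junk `0` out of range) -/
def fnth (γ : Finset ℕ) (i : ℕ) : ℕ := (γ.sort (· ≤ ·)).getD i 0

/-- splitting of a set of leaf positions of a grafting `node [T_1,…,T_m]` into the
sets of leaf positions `I_j = I ∩ L(T_j)` of the children (each shifted to start at `0`) -/
def splitParts : List PTree → Finset ℕ → List (Finset ℕ)
  | [], _ => []
  | t :: ts, I =>
      I.filter (· < t.deg) ::
        splitParts ts ((I.filter fun j => t.deg ≤ j).image fun j => j - t.deg)

open Classical in
/-- the polynomial `R_{(α,β)}` attached to `(α,β) ∈ Γ̄_k(m,n)` (0-indexed, so that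
`α ∪ β = {0,…,k-1}`), for `S = node ls` of arity `m` and `T = node lt` of arity `n` -/
noncomputable def Rab (K : Type) [Field K] (ls lt : List PTree) (k : ℕ)
    (p : Finset ℕ × Finset ℕ) : AMod K :=
  let α := p.1
  let β := p.2
  let S := PTree.node ls
  let T := PTree.node lt
  if α.card = 1 ∧ β.card = 1 then
    -- Case 1
    (if α = {0} then Finsupp.single (some (PTree.node [S, T])) 1
     else Finsupp.single (some (PTree.node [T, S])) 1)
  else if α.card = 1 then
    -- Case 2 : `α = {ν}`, `#β = n`
    let ν := fnth α 0
    if k = lt.length + 1 then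
      Finsupp.single (some (PTree.node (lt.insertIdx ν S))) 1
    else
      nodeF K (lt.mapIdx fun i t =>
        if i = ν then shuffleM K (some t) (some S) else Finsupp.single (some t) 1)
  else if β.card = 1 then
    -- Case 2' : `β = {μ}`, `#α = m`
    let μ := fnth β 0
    if k = ls.length + 1 then
      Finsupp.single (some (PTree.node (ls.insertIdx μ T))) 1
    else
      nodeF K (ls.mapIdx fun i s =>
        if i = μ then shuffleM K (some s) (some T) else Finsupp.single (some s) 1)
  else
    -- Case 3 : `#α = m`, `#β = n`
    nodeF K ((List.range k).map fun j =>
      if j ∈ α ∧ j ∉ β then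
        Finsupp.single (some (ls.getD ((α.filter (· < j)).card) PTree.x)) 1
      else if j ∈ β ∧ j ∉ α then
        Finsupp.single (some (lt.getD ((β.filter (· < j)).card) PTree.x)) 1
      else
        shuffleM K (some (ls.getD ((α.filter (· < j)).card) PTree.x))
          (some (lt.getD ((β.filter (· < j)).card) PTree.x)))

/-!
Compare coefficients of a tree `V = node [V_1,…,V_k]` on both sides. A set `I` of leaves of `V`
splits into sets of leaves of the `V_j`, and the children of `V|I` are the `V_j|I_j ≠ 1`, unless
there is only one of these, in which case it is equal to `V|I`. Hence `V|I = S` means that the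
word `V_1|I_1 ⋯ V_k|I_k`, with its letters `1` deleted, is either `[S]` or `[S_1,…,S_m]`;
recording the positions `α` of the letters other than `1` recovers the word. The same applies to
`T` and the complement of `I`, with positions `β`. Every leaf lies in `I` or in its complement, so
`α ∪ β = {1,…,k}`, and once both words are fixed, the number of sets `I` is the product over `j`
of the coefficients of `V_j` in the letterwise shuffle products, which is the coefficient of `V`
in `R_{(α,β)}`.
-/

section Words

open Finset

variable {σ : Type*}

/-- The `j`-th letter of the word obtained by writing the letters of `A` at the positions in `α`,
in increasing order; all other positions carry the empty letter `none`. -/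
def letterAt (A : List σ) (α : Finset ℕ) (j : ℕ) : Option σ :=
  if j ∈ α then A[#{i ∈ α | i < j}]? else none

/-- The word of length `k` with the letters of `A` at the positions in `α` and `none` elsewhere. -/
def spread (A : List σ) (α : Finset ℕ) (k : ℕ) : List (Option σ) :=
  (List.range k).map (letterAt A α)

/-- The set of positions of the letters of a word that differ from the empty letter `none`. -/
def wordSupport (u : List (Option σ)) : Finset ℕ :=
  {j ∈ range u.length | (u.getD j none).isSome}

@[simp]
theorem length_spread (A : List σ) (α : Finset ℕ) (k : ℕ) : (spread A α k).length = k := by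
  simp [spread]

theorem card_filter_lt_succ (α : Finset ℕ) (j : ℕ) :
    #{i ∈ α | i < j + 1} = #{i ∈ α | i < j} + if j ∈ α then 1 else 0 := by
  have hunion : {i ∈ α | i < j + 1} = {i ∈ α | i < j} ∪ {i ∈ α | i = j} := by
    ext i
    simp only [mem_filter, mem_union]
    grind
  have hdisj : Disjoint {i ∈ α | i < j} {i ∈ α | i = j} :=
    disjoint_filter.2 fun i _ hlt heq => hlt.ne heq
  rw [hunion, card_union_of_disjoint hdisj, Finset.filter_eq']
  split_ifs <;> simp

theorem reduceOption_spread (A : List σ) (α : Finset ℕ) (k : ℕ) :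
    (spread A α k).reduceOption = A.take #{i ∈ α | i < k} := by
  induction k with
  | zero => simp [spread]
  | succ k ih =>
    have hsucc : spread A α (k + 1) = spread A α k ++ [letterAt A α k] := by
      simp [spread, List.range_succ]
    rw [hsucc, List.reduceOption_append, ih, List.reduceOption_singleton, card_filter_lt_succ,
      letterAt]
    split_ifs
    · rw [List.take_add_one]
    · simp

theorem card_filter_lt_lt_card {α : Finset ℕ} {j : ℕ} (hj : j ∈ α) : #{i ∈ α | i < j} < #α :=
  card_lt_card (filter_ssubset.2 ⟨j, hj, lt_irrefl j⟩)

theorem letterAt_of_mem {A : List σ} {α : Finset ℕ} (hα : #α ≤ A.length) {j : ℕ} (hj : j ∈ α)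
    (d : σ) : letterAt A α j = some (A.getD #{i ∈ α | i < j} d) := by
  have hlt : #{i ∈ α | i < j} < A.length := (card_filter_lt_lt_card hj).trans_le hα
  rw [letterAt, if_pos hj, List.getElem?_eq_getElem hlt, List.getD_eq_getElem _ _ hlt]

theorem letterAt_of_notMem (A : List σ) {α : Finset ℕ} {j : ℕ} (hj : j ∉ α) :
    letterAt A α j = none :=
  if_neg hj

theorem isSome_letterAt {A : List σ} {α : Finset ℕ} (hα : #α ≤ A.length) (j : ℕ) :
    (letterAt A α j).isSome ↔ j ∈ α := by
  by_cases hj : j ∈ α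
  · simpa [letterAt, hj] using (card_filter_lt_lt_card hj).trans_le hα
  · simp [letterAt_of_notMem A hj, hj]

theorem mem_wordSupport {u : List (Option σ)} {j : ℕ} :
    j ∈ wordSupport u ↔ (u.getD j none).isSome := by
  by_cases hj : j < u.length <;> simp [wordSupport, hj]

theorem wordSupport_subset_range (u : List (Option σ)) : wordSupport u ⊆ range u.length :=
  filter_subset _ _

theorem wordSupport_spread {A : List σ} {α : Finset ℕ} {k : ℕ} (hαk : α ⊆ range k)
    (hα : #α ≤ A.length) : wordSupport (spread A α k) = α := by
  ext j
  rw [mem_wordSupport]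
  by_cases hj : j < k
  · rw [show (spread A α k).getD j none = letterAt A α j by simp [spread, hj],
      isSome_letterAt hα]
  · have hjα : j ∉ α := fun h => hj (mem_range.1 (hαk h))
    simp [hj, hjα]

theorem card_filter_wordSupport_lt (u : List (Option σ)) (j : ℕ) :
    #{i ∈ wordSupport u | i < j} = (u.take j).reduceOption.length := by
  induction j with
  | zero => simp
  | succ j ih =>
    rw [card_filter_lt_succ, ih, List.take_add_one, List.reduceOption_append, List.length_append]
    simp only [mem_wordSupport, List.getD_eq_getElem?_getD]
    rcases u[j]? with _ | (_ | a) <;> rfl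

theorem card_wordSupport (u : List (Option σ)) : #(wordSupport u) = u.reduceOption.length := by
  have h := card_filter_wordSupport_lt u u.length
  rwa [List.take_length, filter_true_of_mem fun i hi => mem_range.1 (wordSupport_subset_range u hi)]
    at h

theorem spread_reduceOption_wordSupport (u : List (Option σ)) :
    spread u.reduceOption (wordSupport u) u.length = u := by
  refine List.ext_getElem (length_spread _ _ _) fun j _ hj => ?_
  simp only [spread, List.getElem_map, List.getElem_range]
  rw [letterAt, card_filter_wordSupport_lt]
  rcases huj : u[j] with _ | a
  · simp [mem_wordSupport, hj, huj]
  · have hsplit : u.reduceOption =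
        (u.take j).reduceOption ++ a :: (u.drop (j + 1)).reduceOption := by
      rw [← List.reduceOption_cons_of_some, ← huj, ← List.reduceOption_append,
        ← List.drop_eq_getElem_cons, List.take_append_drop]
    rw [if_pos (by simp [mem_wordSupport, hj, huj]), hsplit]
    simp

theorem eq_spread_iff {u : List (Option σ)} {A : List σ} {α : Finset ℕ}
    (hα : α ∈ powersetCard A.length (range u.length)) :
    u = spread A α u.length ↔ u.reduceOption = A ∧ wordSupport u = α := by
  obtain ⟨hαu, hcard⟩ := mem_powersetCard.1 hα
  constructor
  · intro hu
    refine ⟨?_, ?_⟩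
    · rw [hu, reduceOption_spread, filter_true_of_mem fun i hi => mem_range.1 (hαu hi), hcard,
        List.take_length]
    · rw [hu, wordSupport_spread hαu hcard.le]
  · rintro ⟨rfl, rfl⟩
    exact (spread_reduceOption_wordSupport u).symm

open Classical in
theorem sum_ite_eq_spread (u : List (Option σ)) (A : List σ) :
    ∑ α ∈ powersetCard A.length (range u.length), (if u = spread A α u.length then 1 else 0) =
      if u.reduceOption = A then 1 else 0 := by
  rw [sum_congr rfl fun α hα => if_congr (eq_spread_iff hα) rfl rfl]
  split_ifs with hA
  · have hmem : wordSupport u ∈ powersetCard A.length (range u.length) :=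
      mem_powersetCard.2 ⟨wordSupport_subset_range u, hA ▸ card_wordSupport u⟩
    simp [hA, hmem]
  · simp [hA]

theorem letterAt_singleton (a : σ) (ν j : ℕ) :
    letterAt [a] {ν} j = if j = ν then some a else none := by
  by_cases hj : j = ν <;> simp [letterAt, hj, filter_singleton]

theorem letterAt_range (A : List σ) {j k : ℕ} (hj : j < k) : letterAt A (range k) j = A[j]? := by
  have hlow : {i ∈ range k | i < j} = range j := by
    ext i
    simp only [mem_filter, mem_range]
    omega
  rw [letterAt, if_pos (mem_range.2 hj), hlow, card_range]

theorem letterAt_range_erase (A : List σ) {j k : ℕ} (hj : j < k) (ν : ℕ) :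
    letterAt A ((range k).erase ν) j =
      if j < ν then A[j]? else if j = ν then none else A[j - 1]? := by
  have hlow : {i ∈ (range k).erase ν | i < j} = (range j).erase ν := by
    ext i
    simp only [mem_filter, mem_erase, mem_range]
    omega
  rcases lt_trichotomy j ν with hjν | rfl | hjν
  · simp [letterAt, hlow, hjν, hjν.ne, hj, hjν.le]
  · simp [letterAt]
  · simp [letterAt, hlow, hjν.ne', hj, hjν.not_gt, card_erase_of_mem (mem_range.2 hjν)]

end Words

section LeafSets

open Finset

/-- The leaves of `I` lying in the first tree of a forest, when that tree has `a` leaves. -/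
def firstLeaves (a : ℕ) (I : Finset ℕ) : Finset ℕ :=
  {j ∈ I | j < a}

/-- The leaves of `I` lying beyond the first tree of a forest, when that tree has `a` leaves;
they are renumbered so that the remaining forest starts at `0`. -/
def laterLeaves (a : ℕ) (I : Finset ℕ) : Finset ℕ :=
  {j ∈ I | a ≤ j}.image (· - a)

theorem mem_firstLeaves {a j : ℕ} {I : Finset ℕ} : j ∈ firstLeaves a I ↔ j ∈ I ∧ j < a :=
  mem_filter

theorem mem_laterLeaves {a j : ℕ} {I : Finset ℕ} : j ∈ laterLeaves a I ↔ a + j ∈ I := by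
  simp only [laterLeaves, mem_image, mem_filter]
  refine ⟨?_, fun h => ⟨a + j, ⟨h, by omega⟩, by omega⟩⟩
  rintro ⟨i, ⟨hi, hai⟩, rfl⟩
  rwa [Nat.add_sub_cancel' hai]

theorem card_firstLeaves_add_card_laterLeaves (a : ℕ) (I : Finset ℕ) :
    #(firstLeaves a I) + #(laterLeaves a I) = #I := by
  have hinj : Set.InjOn (· - a) ({j ∈ I | a ≤ j} : Finset ℕ) := by
    intro i hi j hj h
    simp only [coe_filter, Set.mem_ofPred_eq] at hi hj h
    omega
  rw [laterLeaves, card_image_of_injOn hinj, firstLeaves]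
  simpa only [not_lt] using card_filter_add_card_filter_not (s := I) (· < a)

theorem firstLeaves_subset (a : ℕ) (I : Finset ℕ) : firstLeaves a I ⊆ range a :=
  fun _ hj => mem_range.2 (mem_firstLeaves.1 hj).2

theorem laterLeaves_subset {a b : ℕ} {I : Finset ℕ} (hI : I ⊆ range (a + b)) :
    laterLeaves a I ⊆ range b :=
  fun _ hj => mem_range.2 (Nat.add_lt_add_iff_left.1 (mem_range.1 (hI (mem_laterLeaves.1 hj))))

theorem firstLeaves_range (a b : ℕ) : firstLeaves a (range (a + b)) = range a := by
  ext j
  simp only [mem_firstLeaves, mem_range]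
  omega

theorem laterLeaves_range (a b : ℕ) : laterLeaves a (range (a + b)) = range b := by
  ext j
  simp [mem_laterLeaves]

theorem firstLeaves_range_sdiff (a b : ℕ) (I : Finset ℕ) :
    firstLeaves a (range (a + b) \ I) = range a \ firstLeaves a I := by
  ext j
  simp only [mem_firstLeaves, mem_sdiff, mem_range]
  grind

theorem laterLeaves_range_sdiff (a b : ℕ) (I : Finset ℕ) :
    laterLeaves a (range (a + b) \ I) = range b \ laterLeaves a I := by
  ext j
  simp [mem_laterLeaves]

theorem firstLeaves_union_laterLeaves (a : ℕ) (I : Finset ℕ) :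
    firstLeaves a I ∪ (laterLeaves a I).image (a + ·) = I := by
  ext j
  simp only [mem_union, mem_firstLeaves, mem_image, mem_laterLeaves]
  refine ⟨by grind, fun hj => ?_⟩
  rcases lt_or_ge j a with hja | hja
  · exact .inl ⟨hj, hja⟩
  · exact .inr ⟨j - a, by rwa [Nat.add_sub_cancel' hja], Nat.add_sub_cancel' hja⟩

theorem firstLeaves_union_image {a : ℕ} {I : Finset ℕ} (hI : I ⊆ range a) (J : Finset ℕ) :
    firstLeaves a (I ∪ J.image (a + ·)) = I := by
  ext j
  have := @hI j
  simp only [mem_firstLeaves, mem_union, mem_image, mem_range] at this ⊢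
  grind

theorem laterLeaves_union_image {a : ℕ} {I : Finset ℕ} (hI : I ⊆ range a) (J : Finset ℕ) :
    laterLeaves a (I ∪ J.image (a + ·)) = J := by
  ext j
  have := @hI (a + j)
  simp only [mem_laterLeaves, mem_union, mem_image, mem_range] at this ⊢
  grind

theorem card_filter_powerset_range_add (a b : ℕ) (P Q : Finset ℕ → Prop) [DecidablePred P]
    [DecidablePred Q] :
    #{I ∈ (range (a + b)).powerset | P (firstLeaves a I) ∧ Q (laterLeaves a I)} =
      #{I ∈ (range a).powerset | P I} * #{I ∈ (range b).powerset | Q I} := by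
  rw [← card_product]
  refine card_nbij' (fun I => (firstLeaves a I, laterLeaves a I))
    (fun p => p.1 ∪ p.2.image (a + ·)) ?_ ?_ ?_ ?_
  · intro I hI
    simp only [coe_filter, mem_powerset, Set.mem_ofPred_eq] at hI
    simp [firstLeaves_subset, laterLeaves_subset hI.1, hI.2]
  · rintro ⟨I, J⟩ hIJ
    simp only [coe_product, coe_filter, mem_powerset, Set.mem_prod, Set.mem_ofPred_eq] at hIJ
    obtain ⟨⟨hI, hPI⟩, hJ, hQJ⟩ := hIJ
    have hsub : I ∪ J.image (a + ·) ⊆ range (a + b) :=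
      union_subset (hI.trans (range_subset_range.2 (Nat.le_add_right a b)))
        (image_subset_iff.2 fun j hj => by simpa using hJ hj)
    simp [hsub, firstLeaves_union_image hI, laterLeaves_union_image hI, hPI, hQJ]
  · exact fun I _ => firstLeaves_union_laterLeaves a I
  · rintro ⟨I, J⟩ hIJ
    simp only [coe_product, coe_filter, mem_powerset, Set.mem_prod, Set.mem_ofPred_eq] at hIJ
    exact Prod.ext (firstLeaves_union_image hIJ.1.1 J) (laterLeaves_union_image hIJ.1.1 J)

end LeafSets

namespace PTree

open Finset

/-- The number of leaves of a forest, given as the list of its trees. -/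
def forestDeg (l : List PTree) : ℕ :=
  (l.map deg).sum

/-- The contractions `T_1|I_1, …, T_m|I_m` of the trees of a forest along `I = I_1 ⊔ … ⊔ I_m`,
as a word in `PRT'`: a tree without selected leaves contributes the letter `1 = none`. -/
def contractions (l : List PTree) (I : Finset ℕ) : List OT :=
  List.zipWith contract l (splitParts l I)

theorem forestDeg_cons (t : PTree) (l : List PTree) : forestDeg (t :: l) = t.deg + forestDeg l := by
  simp [forestDeg]

theorem deg_node (l : List PTree) : (node l).deg = max 1 (forestDeg l) := by
  rw [deg, forestDeg, List.attach_map_val (l := l) (f := deg)]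

theorem deg_pos (t : PTree) : 0 < t.deg := by
  cases t
  exact deg_node _ ▸ lt_max_of_lt_left one_pos

theorem deg_node_of_ne_nil {l : List PTree} (hl : l ≠ []) : (node l).deg = forestDeg l := by
  obtain ⟨t, l, rfl⟩ := List.exists_cons_of_ne_nil hl
  have := t.deg_pos
  rw [deg_node, forestDeg_cons]
  omega

theorem reduced_node {l : List PTree} :
    (node l).Reduced ↔ l.length ≠ 1 ∧ ∀ t ∈ l, Reduced t :=
  ⟨fun h => by cases h with | node _ hlen hred => exact ⟨hlen, hred⟩, fun h => .node l h.1 h.2⟩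

theorem red_singleton (t : PTree) : red (node [t]) = red t := by
  rw [red]

theorem red_node {l : List PTree} (hl : l.length ≠ 1) : red (node l) = node (l.map red) := by
  rw [red, List.attach_map_val (l := l) (f := red)]
  rintro t rfl
  exact hl rfl

theorem red_eq_self {t : PTree} (ht : t.Reduced) : red t = t := by
  induction ht with
  | node l hlen _ ih => rw [red_node hlen, List.map_congr_left ih, List.map_id']

theorem deg_red : ∀ t : PTree, deg (red t) = deg t
  | node l => by
    by_cases hlen : l.length = 1
    · obtain ⟨t, rfl⟩ := List.length_eq_one_iff.1 hlen
      rw [red_singleton, deg_red t, deg_node_of_ne_nil (List.cons_ne_nil _ _)]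
      simp [forestDeg]
    · have ih : ∀ t ∈ l, deg (red t) = deg t := fun t _ => deg_red t
      rw [red_node hlen, deg_node, deg_node, forestDeg, List.map_map]
      exact congrArg (fun d => max 1 d.sum) (List.map_congr_left ih)
decreasing_by
  · simp_all; omega
  · have := List.sizeOf_lt_of_mem ‹t ∈ l›
    simp only [node.sizeOf_spec]
    omega

theorem subList_cons (t : PTree) (l : List PTree) (I : Finset ℕ) :
    subList (t :: l) I =
      (if (firstLeaves t.deg I).Nonempty then [sub t (firstLeaves t.deg I)] else []) ++
        subList l (laterLeaves t.deg I) := by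
  rw [subList]
  rfl

theorem subList_empty (l : List PTree) : subList l ∅ = [] := by
  induction l with
  | nil => rw [subList]
  | cons t l ih => simpa [subList_cons, firstLeaves, laterLeaves] using ih

mutual
theorem sub_range : ∀ t : PTree, sub t (range t.deg) = t
  | node [] => by rw [sub, subList]
  | node (t :: l) => by
    rw [sub, deg_node_of_ne_nil (List.cons_ne_nil _ _), subList_range]
theorem subList_range : ∀ l : List PTree, subList l (range (forestDeg l)) = l
  | [] => by rw [subList]
  | t :: l => by
    rw [subList_cons, forestDeg_cons, firstLeaves_range, laterLeaves_range, subList_range l,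
      sub_range t, if_pos (nonempty_range_iff.2 t.deg_pos.ne'), List.singleton_append]
end

mutual
theorem deg_sub : ∀ (t : PTree) (I : Finset ℕ), I ⊆ range t.deg → I.Nonempty →
    (sub t I).deg = #I
  | node [], I, hI, hne => by
    have hcard := card_le_card hI
    have hpos := hne.card_pos
    simp only [deg_node, forestDeg, List.map_nil, List.sum_nil, card_range] at hcard
    simp only [sub, subList, deg_node, forestDeg, List.map_nil, List.sum_nil]
    omega
  | node (t :: l), I, hI, hne => by
    rw [deg_node_of_ne_nil (List.cons_ne_nil _ _)] at hI
    rw [sub, deg_node, forestDeg_subList _ I hI]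
    exact max_eq_right hne.card_pos
theorem forestDeg_subList : ∀ (l : List PTree) (I : Finset ℕ), I ⊆ range (forestDeg l) →
    forestDeg (subList l I) = #I
  | [], I, hI => by
    obtain rfl : I = ∅ := subset_empty.1 hI
    simp [subList, forestDeg]
  | t :: l, I, hI => by
    rw [forestDeg_cons] at hI
    have ih := forestDeg_subList l _ (laterLeaves_subset hI)
    rw [subList_cons, ← card_firstLeaves_add_card_laterLeaves t.deg I]
    split_ifs with hne
    · rw [List.singleton_append, forestDeg_cons, ih, deg_sub t _ (firstLeaves_subset _ I) hne]
    · rw [List.nil_append, ih, not_nonempty_iff_eq_empty.1 hne, card_empty, zero_add]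
end

theorem contractions_cons (t : PTree) (l : List PTree) (I : Finset ℕ) :
    contractions (t :: l) I =
      contract t (firstLeaves t.deg I) :: contractions l (laterLeaves t.deg I) :=
  rfl

theorem length_contractions (l : List PTree) (I : Finset ℕ) :
    (contractions l I).length = l.length := by
  induction l generalizing I with
  | nil => rfl
  | cons t l ih => rw [contractions_cons, List.length_cons, ih, List.length_cons]

theorem map_red_subList (l : List PTree) (I : Finset ℕ) :
    (subList l I).map red = (contractions l I).reduceOption := by
  induction l generalizing I with
  | nil => rw [subList]; rfl
  | cons t l ih =>
    rw [subList_cons, contractions_cons, List.map_append, ih, contract]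
    by_cases hI : firstLeaves t.deg I = ∅
    · simp [hI, List.reduceOption_cons_of_none]
    · simp [hI, nonempty_iff_ne_empty, List.reduceOption_cons_of_some]

theorem length_le_forestDeg (l : List PTree) : l.length ≤ forestDeg l := by
  induction l with
  | nil => exact zero_le
  | cons t l ih =>
    have := t.deg_pos
    rw [List.length_cons, forestDeg_cons]
    omega

theorem deg_lt_forestDeg {l : List PTree} {t : PTree} (ht : t ∈ l) (hl : l.length ≠ 1) :
    t.deg < forestDeg l := by
  obtain ⟨l₁, l₂, rfl⟩ := List.append_of_mem ht
  have h₁ := length_le_forestDeg l₁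
  have h₂ := length_le_forestDeg l₂
  simp only [forestDeg, List.length_append, List.length_cons, List.map_append, List.map_cons,
    List.sum_append, List.sum_cons] at h₁ h₂ hl ⊢
  omega

theorem finite_setOf_reduced_deg_le (N : ℕ) : {t : PTree | t.Reduced ∧ t.deg ≤ N}.Finite := by
  induction N with
  | zero =>
    refine Set.finite_empty.subset fun t ht => ?_
    exact absurd ht.2 t.deg_pos.not_ge
  | succ N ih =>
    have := ih.to_subtype
    refine ((List.finite_length_le {t : PTree | t.Reduced ∧ t.deg ≤ N} (N + 1)).image
      fun l => node (l.map Subtype.val)).subset ?_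
    rintro ⟨l⟩ ⟨hred, hdeg⟩
    obtain ⟨hlen, hchildren⟩ := reduced_node.1 hred
    have hforest : forestDeg l ≤ N + 1 := (le_max_right _ _).trans (deg_node l ▸ hdeg)
    have hsmall : ∀ t ∈ l, t ∈ {t : PTree | t.Reduced ∧ t.deg ≤ N} := fun t ht =>
      ⟨hchildren t ht, Nat.lt_succ_iff.1 ((deg_lt_forestDeg ht hlen).trans_le hforest)⟩
    lift l to List {t : PTree | t.Reduced ∧ t.deg ≤ N} using hsmall
    refine ⟨l, ?_, rfl⟩
    simpa using (length_le_forestDeg _).trans hforest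

/-- The forests `A` with `Red(node A) = t`, for a reduced tree `t` other than the single vertex:
the forest consisting of `t` alone and the forest of the children of `t`. -/
noncomputable def rootForests : PTree → Finset (List PTree)
  | node l => open Classical in {[node l], l}

theorem mem_rootForests {l A : List PTree} : A ∈ rootForests (node l) ↔ A = [node l] ∨ A = l := by
  simp [rootForests]

theorem length_pos_of_mem_rootForests {l A : List PTree} (hl : 2 ≤ l.length)
    (hA : A ∈ rootForests (node l)) : 0 < A.length := by
  rcases mem_rootForests.1 hA with rfl | rfl
  · exact Nat.one_pos
  · omega

theorem length_le_of_mem_rootForests {l A : List PTree} (hl : 2 ≤ l.length)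
    (hA : A ∈ rootForests (node l)) : A.length ≤ l.length := by
  rcases mem_rootForests.1 hA with rfl | rfl
  · rw [List.length_singleton]
    omega
  · rfl

theorem sum_rootForests {M : Type*} [AddCommMonoid M] {l : List PTree} (hl : l.length ≠ 1)
    (f : List PTree → M) : ∑ A ∈ rootForests (node l), f A = f [node l] + f l := by
  classical
  have hne : [node l] ≠ l := fun h => hl (h ▸ rfl)
  rw [rootForests, sum_pair hne]

theorem contract_node_eq_some_iff {l lv : List PTree} (hl : 2 ≤ l.length) (I : Finset ℕ) :
    contract (node lv) I = some (node l) ↔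
      (contractions lv I).reduceOption ∈ rootForests (node l) := by
  rw [← map_red_subList, mem_rootForests, contract, sub]
  by_cases hI : I = ∅
  · have hnil : [] ≠ l := by rintro rfl; simp at hl
    simp [hI, subList_empty, hnil]
  rw [if_neg hI, Option.some_inj]
  by_cases hlen : (subList lv I).length = 1
  · obtain ⟨t, ht⟩ := List.length_eq_one_iff.1 hlen
    have hne : [red t] ≠ l := by rintro rfl; simp at hl
    simp [ht, red_singleton, hne]
  · have hne : (subList lv I).map red ≠ [node l] := fun h =>
      hlen (by simpa using congrArg List.length h)
    simp [red_node hlen, hne]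

end PTree

section Shuffle

open PTree Finset

theorem ROT_none : ROT none :=
  fun _ h => (Option.some_ne_none _ h.symm).elim

theorem ROT_some {t : PTree} : ROT (some t) ↔ t.Reduced :=
  ⟨fun h => h t rfl, fun h _ hu => Option.some_inj.1 hu ▸ h⟩

theorem degO_eq_zero {V : OT} : degO V = 0 ↔ V = none := by
  cases V with
  | none => simp [degO]
  | some t => simpa [degO] using t.deg_pos.ne'

theorem contractO_empty (V : OT) : contractO V ∅ = none := by
  cases V <;> simp [contractO, contract]

theorem contractO_range {V : OT} (hV : ROT V) : contractO V (range (degO V)) = V := by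
  cases V with
  | none => rfl
  | some t =>
    have hne : range t.deg ≠ ∅ := (nonempty_range_iff.2 t.deg_pos.ne').ne_empty
    simp [contractO, contract, degO, hne, sub_range, red_eq_self (ROT_some.1 hV)]

theorem degO_contractO {V : OT} {I : Finset ℕ} (hI : I ⊆ range (degO V)) :
    degO (contractO V I) = #I := by
  rcases I.eq_empty_or_nonempty with rfl | hne
  · rw [contractO_empty]
    rfl
  cases V with
  | none => exact absurd (subset_empty.1 hI) hne.ne_empty
  | some t => simpa [contractO, contract, degO, hne.ne_empty, deg_red] using deg_sub t I hI hne

theorem contractO_eq_none_iff {V : OT} {I : Finset ℕ} (hI : I ⊆ range (degO V)) :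
    contractO V I = none ↔ I = ∅ := by
  rw [← degO_eq_zero, degO_contractO hI, card_eq_zero]

theorem mem_NFinset {S T V : OT} {I : Finset ℕ} :
    I ∈ NFinset S T V ↔
      I ⊆ range (degO V) ∧ contractO V I = S ∧ contractO V (range (degO V) \ I) = T := by
  simp only [NFinset, mem_filter, mem_powerset]

theorem degO_eq_of_Ncount_ne_zero {S T V : OT} (h : Ncount S T V ≠ 0) :
    degO V = degO S + degO T := by
  obtain ⟨I, hI⟩ := card_ne_zero.1 h
  obtain ⟨hIV, rfl, rfl⟩ := mem_NFinset.1 hI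
  rw [degO_contractO hIV, degO_contractO sdiff_subset, add_comm, card_sdiff_add_card_eq_card hIV,
    card_range]

theorem Ncount_comm (S T V : OT) : Ncount S T V = Ncount T S V := by
  have hcompl {S T : OT} (I) (hI : I ∈ NFinset S T V) : range (degO V) \ I ∈ NFinset T S V := by
    obtain ⟨hIV, hS, hT⟩ := mem_NFinset.1 hI
    exact mem_NFinset.2 ⟨sdiff_subset, hT, by rwa [Finset.sdiff_sdiff_eq_self hIV]⟩
  exact card_nbij' (range (degO V) \ ·) (range (degO V) \ ·) hcompl hcompl
    (fun I hI => Finset.sdiff_sdiff_eq_self (mem_NFinset.1 hI).1)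
    (fun I hI => Finset.sdiff_sdiff_eq_self (mem_NFinset.1 hI).1)

open Classical in
theorem Ncount_none_left (S : OT) {V : OT} (hV : ROT V) :
    Ncount none S V = if V = S then 1 else 0 := by
  have hmem (I : Finset ℕ) : I ∈ NFinset none S V ↔ I = ∅ ∧ V = S := by
    rw [mem_NFinset]
    constructor
    · rintro ⟨hI, hnone, hS⟩
      obtain rfl := (contractO_eq_none_iff hI).1 hnone
      rw [sdiff_empty, contractO_range hV] at hS
      exact ⟨rfl, hS⟩
    · rintro ⟨rfl, rfl⟩
      exact ⟨empty_subset _, contractO_empty V, by rw [sdiff_empty, contractO_range hV]⟩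
  split_ifs with h
  · exact card_eq_one.2 ⟨∅, ext fun I => by rw [hmem, mem_singleton, and_iff_left h]⟩
  · exact card_eq_zero.2 (eq_empty_of_forall_notMem fun I hI => h ((hmem I).1 hI).2)

theorem finite_setOf_ROT_degO_le (N : ℕ) : {V : OT | ROT V ∧ degO V ≤ N}.Finite := by
  refine (((finite_setOf_reduced_deg_le N).image some).insert none).subset ?_
  rintro (_ | t) ⟨hred, hdeg⟩
  · exact Set.mem_insert _ _
  · exact .inr ⟨t, ⟨ROT_some.1 hred, hdeg⟩, rfl⟩

variable (K : Type) [Field K]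

open Classical in
theorem shuffleM_apply (S T V : OT) :
    shuffleM K S T V = if ROT V then (Ncount S T V : K) else 0 := by
  have hfin : (Function.support fun W : OT => ∑ᶠ _ : ROT W,
      Finsupp.single W (Ncount S T W : K)).Finite := by
    refine (finite_setOf_ROT_degO_le (degO S + degO T)).subset fun W hW => ?_
    obtain ⟨hred, hcoeff⟩ : ROT W ∧ (Ncount S T W : K) ≠ 0 := by
      simpa [finsum_eq_if] using hW
    exact ⟨hred, (degO_eq_of_Ncount_ne_zero fun h => hcoeff (by rw [h, Nat.cast_zero])).le⟩
  rw [shuffleM, ← Finsupp.applyAddHom_apply, (Finsupp.applyAddHom V).map_finsum hfin,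
    finsum_eq_single _ V]
  · rw [finsum_eq_if]
    split_ifs <;> simp
  · intro W hW
    rw [finsum_eq_if]
    split_ifs <;> simp [hW]

theorem shuffleM_comm (S T : OT) : shuffleM K S T = shuffleM K T S := by
  simp only [shuffleM, Ncount_comm S T]

theorem shuffleM_none_left {S : OT} (hS : ROT S) : shuffleM K none S = Finsupp.single S 1 := by
  classical
  ext V
  rw [shuffleM_apply, Finsupp.single_apply]
  by_cases hV : ROT V
  · rw [if_pos hV, Ncount_none_left S hV]
    simp [eq_comm]
  · rw [if_neg hV, if_neg (by rintro rfl; exact hV hS)]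

theorem shuffleM_none_right {S : OT} (hS : ROT S) : shuffleM K S none = Finsupp.single S 1 := by
  rw [shuffleM_comm, shuffleM_none_left K hS]

theorem shuffleM_none_none_some (t : PTree) : shuffleM K none none (some t) = 0 := by
  rw [shuffleM_none_left K ROT_none, Finsupp.single_apply, if_neg (by simp)]

end Shuffle

section ListProd

open Finset

variable (K : Type) [Field K]

theorem listProd_cons_cons {σ : Type} (f : σ →₀ K) (fs : List (σ →₀ K)) (t : σ) (ts : List σ) :
    listProd K (f :: fs) (t :: ts) = f t * listProd K fs ts := by
  classical
  rw [listProd, Finsupp.sum_apply, Finsupp.sum, sum_eq_single t]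
  · rw [Finsupp.sum_apply, Finsupp.sum, sum_eq_single ts]
    · rw [Finsupp.single_eq_same]
    · intro _ _ hne
      rw [Finsupp.single_eq_of_ne' (by simpa using hne)]
    · intro hts
      rw [Finsupp.notMem_support_iff.1 hts, mul_zero, Finsupp.single_zero, Finsupp.zero_apply]
  · intro _ _ hne
    simp [Finsupp.sum_apply, hne]
  · intro ht
    simp [Finsupp.notMem_support_iff.1 ht]

theorem listProd_cons_nil {σ : Type} (f : σ →₀ K) (fs : List (σ →₀ K)) :
    listProd K (f :: fs) [] = 0 := by
  simp [listProd, Finsupp.sum_apply]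

theorem listProd_nil_cons {σ : Type} (t : σ) (ts : List σ) : listProd K [] (t :: ts) = 0 := by
  simp [listProd]

theorem listProd_of_length_ne {σ : Type} {fs : List (σ →₀ K)} {ts : List σ}
    (h : fs.length ≠ ts.length) : listProd K fs ts = 0 := by
  induction fs generalizing ts with
  | nil =>
    obtain ⟨t, ts, rfl⟩ := List.exists_cons_of_ne_nil (l := ts) (by rintro rfl; exact h rfl)
    exact listProd_nil_cons K t ts
  | cons f fs ih =>
    cases ts with
    | nil => exact listProd_cons_nil K f fs
    | cons t ts => rw [listProd_cons_cons, ih (fun hlen => h (congrArg (· + 1) hlen)), mul_zero]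

theorem listProd_eq_zero {σ : Type} {fs : List (σ →₀ K)} {ts : List σ} {f : σ →₀ K}
    (hf : f ∈ fs) (hzero : ∀ t ∈ ts, f t = 0) : listProd K fs ts = 0 := by
  induction fs generalizing ts with
  | nil => exact absurd hf List.not_mem_nil
  | cons g fs ih =>
    cases ts with
    | nil => exact listProd_cons_nil K g fs
    | cons t ts =>
      rw [listProd_cons_cons]
      rcases List.mem_cons.1 hf with rfl | hf
      · rw [hzero t List.mem_cons_self, zero_mul]
      · rw [ih hf fun s hs => hzero s (List.mem_cons_of_mem t hs), mul_zero]

theorem listProd_map_single {σ : Type} (ts : List σ) :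
    listProd K (ts.map fun t => Finsupp.single t (1 : K)) = Finsupp.single ts 1 := by
  induction ts with
  | nil => rfl
  | cons t ts ih =>
    rw [List.map_cons, listProd, ih]
    simp only [Finsupp.sum_single_index, Finsupp.single_zero, mul_zero, mul_one]

theorem mapM_id_eq_some_iff {τ : Type} {ts : List (Option τ)} {l : List τ} :
    ts.mapM (id : Option τ → Option τ) = some l ↔ ts = l.map some := by
  induction ts generalizing l with
  | nil => cases l <;> simp
  | cons t ts ih =>
    rw [List.mapM_cons]
    cases t <;> cases l <;> simp [Option.bind_eq_some_iff, ih, and_comm]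

theorem nodeF_apply_node (fs : List (AMod K)) (l : List PTree) :
    nodeF K fs (some (.node l)) = listProd K fs (l.map some) := by
  classical
  rw [nodeF, Finsupp.sum_apply, Finsupp.sum, sum_eq_single (l.map some)]
  · rw [mapM_id_eq_some_iff.2 rfl]
    exact Finsupp.single_eq_same
  · intro ts _ hne
    split
    · next l' hl' =>
      refine Finsupp.single_eq_of_ne fun h => hne ?_
      rw [mapM_id_eq_some_iff.1 hl', PTree.node.inj (Option.some_inj.1 h)]
    · rfl
  · intro hl
    rw [mapM_id_eq_some_iff.2 rfl, Finsupp.notMem_support_iff.1 hl]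
    simp only [Finsupp.single_zero, Finsupp.zero_apply]

theorem nodeF_apply_none (fs : List (AMod K)) : nodeF K fs none = 0 := by
  rw [nodeF, Finsupp.sum_apply, Finsupp.sum]
  refine sum_eq_zero fun ts _ => ?_
  split
  · exact Finsupp.single_eq_of_ne (Option.some_ne_none _).symm
  · rfl

theorem nodeF_map_single (l : List PTree) :
    nodeF K (l.map fun t => Finsupp.single (some t) 1) = Finsupp.single (some (.node l)) 1 := by
  have hprod := listProd_map_single K (l.map some)
  rw [List.map_map] at hprod
  rw [nodeF, show (fun t => Finsupp.single (some t) (1 : K)) =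
    (fun t => Finsupp.single t 1) ∘ some from rfl, hprod, Finsupp.sum_single_index]
  all_goals simp only [mapM_id_eq_some_iff.2 rfl, Finsupp.single_zero]

end ListProd

section Counting

open PTree Finset

open Classical in
/-- The number of decompositions of the leaf set of the forest `l` into `I` and its complement such
that contracting the trees of `l` along `I` yields the word `u`, and along the complement the word
`w`. It is the forest analogue of `Ncount`, with letters `1 = none` recorded. -/
noncomputable def wordCount (u w : List OT) (l : List PTree) : ℕ :=
  #{I ∈ (range (forestDeg l)).powerset |
    contractions l I = u ∧ contractions l (range (forestDeg l) \ I) = w}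

open Classical in
/-- The number of decompositions of the leaf set of the forest `l` into `I` and its complement such
that contracting `l` along `I` yields the forest `A`, and along the complement the forest `B`. It is
the forest analogue of `Ncount`. -/
noncomputable def forestCount (A B l : List PTree) : ℕ :=
  #{I ∈ (range (forestDeg l)).powerset |
    (contractions l I).reduceOption = A ∧
      (contractions l (range (forestDeg l) \ I)).reduceOption = B}

theorem wordCount_nil : wordCount [] [] [] = 1 := by
  classical
  rw [wordCount, filter_true_of_mem fun _ _ => ⟨rfl, rfl⟩]
  rfl

theorem wordCount_cons (o p : OT) (u w : List OT) (t : PTree) (l : List PTree) :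
    wordCount (o :: u) (p :: w) (t :: l) = Ncount o p (some t) * wordCount u w l := by
  classical
  rw [Ncount, NFinset, wordCount, wordCount]
  refine Eq.trans ?_ (card_filter_powerset_range_add t.deg (forestDeg l) _ _)
  rw [forestDeg_cons]
  refine congrArg card (filter_congr fun I _ => ?_)
  rw [contractions_cons, contractions_cons, firstLeaves_range_sdiff, laterLeaves_range_sdiff,
    List.cons.injEq, List.cons.injEq]
  exact and_and_and_comm

theorem forestCount_eq_sum (A B l : List PTree) :
    forestCount A B l =
      ∑ α ∈ powersetCard A.length (range l.length), ∑ β ∈ powersetCard B.length (range l.length),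
        wordCount (spread A α l.length) (spread B β l.length) l := by
  classical
  have hsum (I : Finset ℕ) (C : List PTree) := sum_ite_eq_spread (contractions l I) C
  simp only [length_contractions] at hsum
  simp only [forestCount, wordCount, card_filter]
  rw [sum_congr rfl fun α _ => sum_comm, sum_comm]
  refine sum_congr rfl fun I _ => ?_
  rw [← mul_one 1, ← ite_zero_mul_ite_zero, ← hsum, ← hsum, sum_mul_sum]
  simp only [ite_zero_mul_ite_zero, mul_one]

open Classical in
theorem listProd_zipWith_shuffleM (K : Type) [Field K] {u w : List OT} {l : List PTree}
    (hu : u.length = l.length) (hw : w.length = l.length) :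
    listProd K (List.zipWith (shuffleM K) u w) (l.map some) =
      if ∀ t ∈ l, t.Reduced then (wordCount u w l : K) else 0 := by
  induction l generalizing u w with
  | nil =>
    obtain rfl := List.length_eq_zero_iff.1 hu
    obtain rfl := List.length_eq_zero_iff.1 hw
    simp [wordCount_nil, listProd]
  | cons t l ih =>
    obtain ⟨o, u, rfl⟩ := List.exists_of_length_succ u hu
    obtain ⟨p, w, rfl⟩ := List.exists_of_length_succ w hw
    rw [List.zipWith_cons_cons, List.map_cons, listProd_cons_cons, wordCount_cons,
      ih (Nat.succ.inj hu) (Nat.succ.inj hw), shuffleM_apply]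
    simp only [ROT_some, List.forall_mem_cons, ite_and]
    split_ifs <;> simp

theorem card_filter_mem_and_mem {ι γ δ : Type*} [DecidableEq γ] [DecidableEq δ] (s : Finset ι)
    (f : ι → γ) (g : ι → δ) (C : Finset γ) (D : Finset δ) :
    #{i ∈ s | f i ∈ C ∧ g i ∈ D} = ∑ c ∈ C, ∑ d ∈ D, #{i ∈ s | f i = c ∧ g i = d} := by
  simp only [card_filter, ite_and]
  rw [sum_congr rfl fun c _ => sum_comm, sum_comm]
  refine sum_congr rfl fun i _ => ?_
  simp

theorem forestCount_eq_zero_of_length_lt {A l : List PTree} (h : l.length < A.length)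
    (B : List PTree) : forestCount A B l = 0 := by
  rw [forestCount_eq_sum, powersetCard_eq_empty.2 (by rwa [card_range]), sum_empty]

theorem Ncount_node {ls lt : List PTree} (hs : 2 ≤ ls.length) (ht : 2 ≤ lt.length)
    (lv : List PTree) :
    Ncount (some (node ls)) (some (node lt)) (some (node lv)) =
      ∑ A ∈ rootForests (node ls), ∑ B ∈ rootForests (node lt), forestCount A B lv := by
  classical
  rcases eq_or_ne lv [] with rfl | hv
  · rw [sum_eq_zero fun A hA => sum_eq_zero fun B _ =>
      forestCount_eq_zero_of_length_lt (l := []) (length_pos_of_mem_rootForests hs hA) B]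
    by_contra hcount
    have hdeg : (node []).deg = _ + _ := degO_eq_of_Ncount_ne_zero hcount
    have hS : 0 < degO (some (node ls)) := deg_pos _
    have hT : 0 < degO (some (node lt)) := deg_pos _
    rw [deg_node, forestDeg, List.map_nil, List.sum_nil] at hdeg
    omega
  · have hdeg : degO (some (node lv)) = forestDeg lv := deg_node_of_ne_nil hv
    rw [Ncount, NFinset, hdeg]
    simp only [contractO, contract_node_eq_some_iff hs, contract_node_eq_some_iff ht, forestCount]
    convert card_filter_mem_and_mem _ _ _ _ _

end Counting

section Graft

open PTree Finset

variable (K : Type) [Field K]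

/-- The polynomial `R_{(α,β)}` of a pair of forests: the words of length `k` with the trees of `A`
at the positions in `α` and of `B` at the positions in `β` are shuffled letter by letter, and the
results are grafted. As `1 = none` is neutral for `⧢`, all the cases in the definition of `Rab` are
of this form, for suitable forests `A` and `B`. -/
noncomputable def graftTerm (A B : List PTree) (k : ℕ) (p : Finset ℕ × Finset ℕ) : AMod K :=
  nodeF K (List.zipWith (shuffleM K) (spread A p.1 k) (spread B p.2 k))

theorem mem_GammaF {k m n : ℕ} {p : Finset ℕ × Finset ℕ} :
    p ∈ GammaF k m n ↔ #p.1 = m ∧ #p.2 = n ∧ p.1 ∪ p.2 = range k := by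
  simp only [GammaF, mem_filter, mem_product, mem_powerset, and_iff_right_iff_imp]
  rintro ⟨-, -, h⟩
  exact ⟨h ▸ subset_union_left, h ▸ subset_union_right⟩

theorem length_le_of_mem_GammaF {k m n : ℕ} {p : Finset ℕ × Finset ℕ} (hp : p ∈ GammaF k m n) :
    k ≤ m + n := by
  obtain ⟨rfl, rfl, hunion⟩ := mem_GammaF.1 hp
  simpa [hunion] using card_union_le p.1 p.2

theorem graftTerm_apply_node_of_ne {k : ℕ} {l : List PTree} (hk : k ≠ l.length) (A B : List PTree)
    (p : Finset ℕ × Finset ℕ) : graftTerm K A B k p (some (node l)) = 0 := by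
  rw [graftTerm, nodeF_apply_node, listProd_of_length_ne]
  simpa using hk

open Classical in
theorem graftTerm_apply_node (A B l : List PTree) (p : Finset ℕ × Finset ℕ) :
    graftTerm K A B l.length p (some (node l)) =
      if ∀ t ∈ l, t.Reduced then
        (wordCount (spread A p.1 l.length) (spread B p.2 l.length) l : K) else 0 := by
  rw [graftTerm, nodeF_apply_node,
    listProd_zipWith_shuffleM K (length_spread _ _ _) (length_spread _ _ _)]

theorem graftTerm_apply_node_of_notMem_union {k j : ℕ} (hj : j < k) {p : Finset ℕ × Finset ℕ}
    (hjp : j ∉ p.1 ∪ p.2) (A B l : List PTree) : graftTerm K A B k p (some (node l)) = 0 := by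
  rw [notMem_union] at hjp
  rw [graftTerm, nodeF_apply_node]
  refine listProd_eq_zero K (f := shuffleM K none none) ?_ ?_
  · refine List.mem_iff_getElem.2 ⟨j, by simpa using hj, ?_⟩
    simp [spread, letterAt_of_notMem, hjp]
  · simp [shuffleM_none_none_some]

open Classical in
theorem sum_graftTerm_apply_node (A B l : List PTree) :
    ∑ p ∈ GammaF l.length A.length B.length, graftTerm K A B l.length p (some (node l)) =
      if ∀ t ∈ l, t.Reduced then (forestCount A B l : K) else 0 := by
  have hsub : GammaF l.length A.length B.length ⊆
      powersetCard A.length (range l.length) ×ˢ powersetCard B.length (range l.length) := by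
    intro p hp
    obtain ⟨hA, hB, hunion⟩ := mem_GammaF.1 hp
    exact mem_product.2 ⟨mem_powersetCard.2 ⟨hunion ▸ subset_union_left, hA⟩,
      mem_powersetCard.2 ⟨hunion ▸ subset_union_right, hB⟩⟩
  rw [sum_subset hsub, sum_product, forestCount_eq_sum]
  · simp only [graftTerm_apply_node]
    split_ifs <;> simp
  · intro p hp hpΓ
    obtain ⟨⟨hαl, hα⟩, hβl, hβ⟩ := by simpa only [mem_product, mem_powersetCard] using hp
    obtain ⟨j, hj, hjp⟩ : ∃ j ∈ range l.length, j ∉ p.1 ∪ p.2 := by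
      by_contra! hcover
      exact hpΓ (mem_GammaF.2 ⟨hα, hβ, (union_subset hαl hβl).antisymm hcover⟩)
    exact graftTerm_apply_node_of_notMem_union K (mem_range.1 hj) hjp A B l

open Classical in
theorem sum_Icc_graftTerm_apply_node {A B : List PTree} (hA : 0 < A.length) {N : ℕ}
    (hN : A.length + B.length ≤ N) (l : List PTree) :
    ∑ k ∈ Icc 2 N, ∑ p ∈ GammaF k A.length B.length, graftTerm K A B k p (some (node l)) =
      if (node l).Reduced then (forestCount A B l : K) else 0 := by
  have hoff (k : ℕ) (hk : k ≠ l.length) :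
      ∑ p ∈ GammaF k A.length B.length, graftTerm K A B k p (some (node l)) = 0 :=
    sum_eq_zero fun p _ => graftTerm_apply_node_of_ne K hk A B p
  by_cases hl : l.length ∈ Icc 2 N
  · have hl1 : l.length ≠ 1 := ne_of_gt (mem_Icc.1 hl).1
    rw [sum_eq_single_of_mem _ hl fun k _ hk => hoff k hk, sum_graftTerm_apply_node]
    simp only [reduced_node, ne_eq, hl1, not_false_eq_true, true_and]
  · rw [sum_eq_zero fun k hk => hoff k (ne_of_mem_of_not_mem hk hl), eq_comm, ite_eq_right_iff]
    intro hred
    obtain ⟨hl1, hchildren⟩ := reduced_node.1 hred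
    rw [mem_Icc, not_and_or] at hl
    rcases hl with hl2 | hlN
    · rw [forestCount_eq_zero_of_length_lt (by omega), Nat.cast_zero]
    · have hempty : GammaF l.length A.length B.length = ∅ := eq_empty_of_forall_notMem
        fun p hp => hlN ((length_le_of_mem_GammaF hp).trans hN)
      simpa only [hempty, sum_empty, if_pos hchildren] using (sum_graftTerm_apply_node K A B l).symm

theorem graftTerm_swap (A B : List PTree) (k : ℕ) (α β : Finset ℕ) :
    graftTerm K A B k (α, β) = graftTerm K B A k (β, α) := by
  rw [graftTerm, graftTerm, List.zipWith_comm]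
  simp only [shuffleM_comm K]

theorem graftTerm_singleton_range (S : PTree) {B : List PTree} (hB : ∀ t ∈ B, t.Reduced) (ν : ℕ) :
    graftTerm K [S] B B.length ({ν}, range B.length) = nodeF K (B.mapIdx fun i t =>
      if i = ν then shuffleM K (some t) (some S) else Finsupp.single (some t) 1) := by
  rw [graftTerm]
  congr 1
  refine List.ext_getElem (by simp) fun j _ hj => ?_
  rw [List.length_mapIdx] at hj
  simp only [spread, List.getElem_zipWith, List.getElem_map, List.getElem_range,
    List.getElem_mapIdx, letterAt_singleton, letterAt_range B hj, List.getElem?_eq_getElem hj]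
  split_ifs
  · exact shuffleM_comm K _ _
  · exact shuffleM_none_left K (ROT_some.2 (hB _ (List.getElem_mem hj)))

theorem graftTerm_singleton_erase {S : PTree} (hS : S.Reduced) {B : List PTree}
    (hB : ∀ t ∈ B, t.Reduced) {ν : ℕ} (hν : ν ≤ B.length) :
    graftTerm K [S] B (B.length + 1) ({ν}, (range (B.length + 1)).erase ν) =
      Finsupp.single (some (node (B.insertIdx ν S))) 1 := by
  rw [graftTerm, ← nodeF_map_single]
  congr 1
  refine List.ext_getElem (by simp [List.length_insertIdx_of_le_length hν]) fun j hj _ => ?_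
  have hj : j < B.length + 1 := by simpa using hj
  simp only [spread, List.getElem_zipWith, List.getElem_map, List.getElem_range,
    List.getElem_insertIdx, letterAt_singleton, letterAt_range_erase B hj]
  rcases lt_trichotomy j ν with hjν | rfl | hjν
  · have hjB : j < B.length := hjν.trans_le hν
    simp only [hjν, hjν.ne, if_false, if_true, dite_true, List.getElem?_eq_getElem hjB]
    exact shuffleM_none_left K (ROT_some.2 (hB _ (List.getElem_mem hjB)))
  · simpa using shuffleM_none_right K (ROT_some.2 hS)
  · have hjB : j - 1 < B.length := by omega
    simp only [hjν.not_gt, hjν.ne', if_false, dite_false, List.getElem?_eq_getElem hjB]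
    exact shuffleM_none_left K (ROT_some.2 (hB _ (List.getElem_mem hjB)))

theorem eq_erase_or_eq_range_of_singleton_union {k n ν : ℕ} {β : Finset ℕ} (hβ : #β = n)
    (hunion : {ν} ∪ β = range k) :
    (k = n + 1 ∧ β = (range k).erase ν) ∨ (k = n ∧ β = range k) := by
  rw [← insert_eq] at hunion
  by_cases hν : ν ∈ β
  · rw [insert_eq_of_mem hν] at hunion
    exact .inr ⟨by rw [← hβ, hunion, card_range], hunion⟩
  · refine .inl ⟨by rw [← hβ, ← card_insert_of_notMem hν, hunion, card_range], ?_⟩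
    rw [← hunion, erase_insert hν]

theorem graftTerm_singleton {S : PTree} (hS : S.Reduced) {B : List PTree}
    (hB : ∀ t ∈ B, t.Reduced) {k ν : ℕ} {β : Finset ℕ} (hβ : #β = B.length)
    (hunion : {ν} ∪ β = range k) :
    graftTerm K [S] B k ({ν}, β) =
      if k = B.length + 1 then Finsupp.single (some (node (B.insertIdx ν S))) 1
      else nodeF K (B.mapIdx fun i t =>
        if i = ν then shuffleM K (some t) (some S) else Finsupp.single (some t) 1) := by
  have hν : ν < k := mem_range.1 (hunion ▸ mem_union_left _ (mem_singleton_self ν))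
  rcases eq_erase_or_eq_range_of_singleton_union hβ hunion with ⟨rfl, rfl⟩ | ⟨rfl, rfl⟩
  · rw [if_pos rfl, graftTerm_singleton_erase K hS hB (Nat.lt_succ_iff.1 hν)]
  · rw [if_neg (Nat.succ_ne_self _).symm, graftTerm_singleton_range K S hB]

section Cases

variable {ls lt : List PTree} {k : ℕ} {p : Finset ℕ × Finset ℕ}

theorem Rab_eq_graftTerm_of_card_one_one (hS : (node ls).Reduced) (hT : (node lt).Reduced)
    (hk : 2 ≤ k) (hp : p ∈ GammaF k 1 1) :
    Rab K ls lt k p = graftTerm K [node ls] [node lt] k p := by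
  obtain ⟨α, β⟩ := p
  obtain ⟨hα, hβ, hunion⟩ := mem_GammaF.1 hp
  obtain rfl : k = 2 := (length_le_of_mem_GammaF hp).antisymm hk
  obtain ⟨ν, rfl⟩ := card_eq_one.1 hα
  have hν : ν < 2 := mem_range.1 (hunion ▸ mem_union_left _ (mem_singleton_self ν))
  rw [graftTerm_singleton K hS (by simpa using hT) hβ hunion, Rab]
  simp only [hα, hβ, and_self, if_true, List.length_singleton]
  interval_cases ν <;> simp

theorem Rab_eq_graftTerm_of_card_left (hS : (node ls).Reduced) (hT : (node lt).Reduced)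
    (hn : 2 ≤ lt.length) (hp : p ∈ GammaF k 1 lt.length) :
    Rab K ls lt k p = graftTerm K [node ls] lt k p := by
  obtain ⟨α, β⟩ := p
  obtain ⟨hα, hβ, hunion⟩ := mem_GammaF.1 hp
  obtain ⟨ν, rfl⟩ := card_eq_one.1 hα
  have hβ1 : #β ≠ 1 := by simp only at hβ; omega
  rw [graftTerm_singleton K hS (reduced_node.1 hT).2 hβ hunion, Rab]
  simp only [hα, hβ1, and_false, if_false, if_true, fnth, sort_singleton, List.getD_cons_zero]

theorem Rab_eq_graftTerm_of_card_right (hS : (node ls).Reduced) (hT : (node lt).Reduced)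
    (hm : 2 ≤ ls.length) (hp : p ∈ GammaF k ls.length 1) :
    Rab K ls lt k p = graftTerm K ls [node lt] k p := by
  obtain ⟨α, β⟩ := p
  obtain ⟨hα, hβ, hunion⟩ := mem_GammaF.1 hp
  obtain ⟨μ, rfl⟩ := card_eq_one.1 hβ
  have hα1 : #α ≠ 1 := by simp only at hα; omega
  rw [graftTerm_swap, graftTerm_singleton K hT (reduced_node.1 hS).2 hα
    (by rwa [union_comm]), Rab]
  simp only [hβ, hα1, false_and, if_false, if_true, fnth, sort_singleton, List.getD_cons_zero]

theorem ROT_letterAt {A : List PTree} (hA : ∀ t ∈ A, t.Reduced) (α : Finset ℕ) (j : ℕ) :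
    ROT (letterAt A α j) := by
  intro t ht
  rw [letterAt] at ht
  split_ifs at ht
  exact hA t (List.mem_of_getElem? ht)

theorem Rab_eq_graftTerm_of_card_card (hS : (node ls).Reduced) (hT : (node lt).Reduced)
    (hm : 2 ≤ ls.length) (hn : 2 ≤ lt.length) (hp : p ∈ GammaF k ls.length lt.length) :
    Rab K ls lt k p = graftTerm K ls lt k p := by
  obtain ⟨α, β⟩ := p
  obtain ⟨hα, hβ, hunion⟩ := mem_GammaF.1 hp
  have hα1 : #α ≠ 1 := by simp only at hα; omega
  have hβ1 : #β ≠ 1 := by simp only at hβ; omega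
  rw [Rab, graftTerm, spread, spread, List.zipWith_map, List.zipWith_self]
  simp only [hα1, hβ1, false_and, if_false]
  refine congrArg _ (List.map_congr_left fun j hj => ?_)
  have hjunion : j ∈ α ∪ β := hunion ▸ mem_range.2 (List.mem_range.1 hj)
  by_cases hjα : j ∈ α <;> by_cases hjβ : j ∈ β
  · simp only [hjα, hjβ, not_true, and_false, if_false, letterAt_of_mem hα.le hjα x,
      letterAt_of_mem hβ.le hjβ x]
  · rw [if_pos ⟨hjα, hjβ⟩, ← letterAt_of_mem hα.le hjα, letterAt_of_notMem lt hjβ,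
      shuffleM_none_right K (ROT_letterAt (reduced_node.1 hS).2 α j)]
  · rw [if_neg (fun h => hjα h.1), if_pos ⟨hjβ, hjα⟩, ← letterAt_of_mem hβ.le hjβ,
      letterAt_of_notMem ls hjα, shuffleM_none_left K (ROT_letterAt (reduced_node.1 hT).2 β j)]
  · exact absurd hjunion (notMem_union.2 ⟨hjα, hjβ⟩)

theorem Rab_eq_graftTerm (hS : (node ls).Reduced) (hT : (node lt).Reduced) (hm : 2 ≤ ls.length)
    (hn : 2 ≤ lt.length) (hk : 2 ≤ k) {A B : List PTree} (hA : A ∈ rootForests (node ls))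
    (hB : B ∈ rootForests (node lt)) (hp : p ∈ GammaF k A.length B.length) :
    Rab K ls lt k p = graftTerm K A B k p := by
  rcases mem_rootForests.1 hA with rfl | rfl <;> rcases mem_rootForests.1 hB with rfl | rfl
  · exact Rab_eq_graftTerm_of_card_one_one K hS hT hk hp
  · exact Rab_eq_graftTerm_of_card_left K hS hT hn hp
  · exact Rab_eq_graftTerm_of_card_right K hS hT hm hp
  · exact Rab_eq_graftTerm_of_card_card K hS hT hm hn hp

end Cases

theorem disjoint_GammaF {k m n m' n' : ℕ} (h : m ≠ m' ∨ n ≠ n') :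
    Disjoint (GammaF k m n) (GammaF k m' n') := by
  rw [disjoint_left]
  intro p hp hp'
  rw [mem_GammaF] at hp hp'
  omega

theorem sum_GammaBar {M : Type*} [AddCommMonoid M] (f : Finset ℕ × Finset ℕ → M)
    {ls lt : List PTree} (hm : 2 ≤ ls.length) (hn : 2 ≤ lt.length) (k : ℕ) :
    ∑ p ∈ GammaBar k ls.length lt.length, f p =
      ∑ A ∈ rootForests (node ls), ∑ B ∈ rootForests (node lt),
        ∑ p ∈ GammaF k A.length B.length, f p := by
  simp only [sum_rootForests (ne_of_gt hm), sum_rootForests (ne_of_gt hn), List.length_singleton]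
  rw [GammaBar, sum_union, sum_union, sum_union, add_assoc]
  · exact disjoint_GammaF (by omega)
  · exact disjoint_union_left.2 ⟨disjoint_GammaF (by omega), disjoint_GammaF (by omega)⟩
  · simp only [disjoint_union_left]
    exact ⟨⟨disjoint_GammaF (by omega), disjoint_GammaF (by omega)⟩, disjoint_GammaF (by omega)⟩

theorem sum_GammaBar_Rab {ls lt : List PTree} (hS : (node ls).Reduced) (hT : (node lt).Reduced)
    (hm : 2 ≤ ls.length) (hn : 2 ≤ lt.length) {k : ℕ} (hk : 2 ≤ k) :
    ∑ p ∈ GammaBar k ls.length lt.length, Rab K ls lt k p =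
      ∑ A ∈ rootForests (node ls), ∑ B ∈ rootForests (node lt),
        ∑ p ∈ GammaF k A.length B.length, graftTerm K A B k p := by
  rw [sum_GammaBar _ hm hn]
  exact sum_congr rfl fun A hA => sum_congr rfl fun B hB => sum_congr rfl fun p hp =>
    Rab_eq_graftTerm K hS hT hm hn hk hA hB hp

theorem shuffleM_node_node {ls lt : List PTree} (hm : 2 ≤ ls.length) (hn : 2 ≤ lt.length) :
    shuffleM K (some (node ls)) (some (node lt)) =
      ∑ A ∈ rootForests (node ls), ∑ B ∈ rootForests (node lt),
        ∑ k ∈ Icc 2 (ls.length + lt.length),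
          ∑ p ∈ GammaF k A.length B.length, graftTerm K A B k p := by
  classical
  ext V
  rw [shuffleM_apply]
  simp only [Finsupp.finsetSum_apply]
  rcases V with _ | ⟨⟨lv⟩⟩
  · have hcount : Ncount (some (node ls)) (some (node lt)) none = 0 := by
      by_contra h
      have hdeg : 0 = (node ls).deg + _ := degO_eq_of_Ncount_ne_zero h
      have := (node ls).deg_pos
      omega
    simp [hcount, graftTerm, nodeF_apply_none]
  · rw [sum_congr rfl fun A hA => sum_congr rfl fun B hB => sum_Icc_graftTerm_apply_node K
      (length_pos_of_mem_rootForests hm hA) (add_le_add (length_le_of_mem_rootForests hm hA)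
        (length_le_of_mem_rootForests hn hB)) lv]
    rw [Ncount_node hm hn]
    simp only [ROT_some]
    split_ifs <;> simp

end Graft

/-- For finite planar reduced rooted trees `S = node [S_1,…,S_m]` and
`T = node [T_1,…,T_n]` of arities `m, n ≥ 2`,
`S ⧢ T = Σ_{k=2}^{m+n} Σ_{(α,β) ∈ Γ̄_k(m,n)} R_{(α,β)}`. -/
theorem shuffle_eq_sum_Rab (K : Type) [Field K] (ls lt : List PTree)
    (hm : 2 ≤ ls.length) (hn : 2 ≤ lt.length)
    (hS : (PTree.node ls).Reduced) (hT : (PTree.node lt).Reduced) :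
    shuffleM K (some (PTree.node ls)) (some (PTree.node lt))
      = ∑ k ∈ Finset.Icc 2 (ls.length + lt.length),
          ∑ p ∈ GammaBar k ls.length lt.length, Rab K ls lt k p := by
  calc
    _ = ∑ A ∈ PTree.rootForests (.node ls), ∑ B ∈ PTree.rootForests (.node lt),
          ∑ k ∈ Finset.Icc 2 (ls.length + lt.length),
            ∑ p ∈ GammaF k A.length B.length, graftTerm K A B k p :=
      shuffleM_node_node K hm hn
    _ = ∑ k ∈ Finset.Icc 2 (ls.length + lt.length),
          ∑ A ∈ PTree.rootForests (.node ls), ∑ B ∈ PTree.rootForests (.node lt),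
            ∑ p ∈ GammaF k A.length B.length, graftTerm K A B k p := by
      rw [Finset.sum_congr rfl fun A _ => Finset.sum_comm, Finset.sum_comm]
    _ = _ := Finset.sum_congr rfl fun k hk =>
      (sum_GammaBar_Rab K hS hT hm hn (Finset.mem_Icc.1 hk).1).symm
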